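/- arXiv:2012.12952 — 2 statements merged into one kernel-verified Lean document; each statement's English description precedes it below -/
import Mathlib

section
/- Let Y be a CAT(0) space, E : Y → ℝ ∪ {+∞} a λ-convex and lower semicontinuous functional with D(E) nonempty, λ ∈ ℝ, let y ∈ D(|∂⁻E|) and let (y_t)_{t>0} be the gradient flow trajectory for E starting from y. Then for every h > 0 it holds d(y, y_h) ≤ |∂⁻E|(y)·∫_0^h e^{−λt} dt. -/
open Filter MeasureTheory Set Bornology
open scoped ENNReal Topology NNReal

/-- A (constant-speed, minimizing) geodesic defined on `[0,1]`:
`d(γ_s, γ_t) = |s - t| * d(γ_0, γ_1)` for all `s, t ∈ [0,1]`. -/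
def IsGeodesic {Y : Type*} [MetricSpace Y] (γ : ℝ → Y) : Prop :=
  ∀ s ∈ Set.Icc (0:ℝ) 1, ∀ t ∈ Set.Icc (0:ℝ) 1,
    dist (γ s) (γ t) = |s - t| * dist (γ 0) (γ 1)

/-- A metric space is geodesic if every two points are joined by a geodesic. -/
def GeodesicSpace (Y : Type*) [MetricSpace Y] : Prop :=
  ∀ x y : Y, ∃ γ : ℝ → Y, IsGeodesic γ ∧ γ 0 = x ∧ γ 1 = y

/-- The CAT(0) condition: geodesic space satisfying the comparison inequality
`d²(γ_t, a) ≤ (1-t)·d²(γ_0, a) + t·d²(γ_1, a) − t(1-t)·d²(γ_0, γ_1)`.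
(Completeness is required separately as a typeclass assumption.) -/
def Cat0 (Y : Type*) [MetricSpace Y] : Prop :=
  GeodesicSpace Y ∧
    ∀ γ : ℝ → Y, IsGeodesic γ → ∀ a : Y, ∀ t ∈ Set.Icc (0:ℝ) 1,
      dist (γ t) a ^ 2 ≤ (1 - t) * dist (γ 0) a ^ 2 + t * dist (γ 1) a ^ 2
        - t * (1 - t) * dist (γ 0) (γ 1) ^ 2

/-- A subset is geodesically convex if every geodesic joining two of its points
lies entirely inside it. -/
def GeodesicConvex {Y : Type*} [MetricSpace Y] (C : Set Y) : Prop :=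
  ∀ γ : ℝ → Y, IsGeodesic γ → γ 0 ∈ C → γ 1 ∈ C → ∀ t ∈ Set.Icc (0:ℝ) 1, γ t ∈ C

/-- `lam`-convexity along geodesics of an extended-real-valued functional:
`E(γ_t) ≤ (1-t)E(γ_0) + tE(γ_1) − (lam/2)t(1−t)d²(γ_0,γ_1)`. -/
def LamConvex {Y : Type*} [MetricSpace Y] (lam : ℝ) (E : Y → EReal) : Prop :=
  ∀ γ : ℝ → Y, IsGeodesic γ → ∀ t ∈ Set.Icc (0:ℝ) 1,
    E (γ t) ≤ ((1 - t : ℝ) : EReal) * E (γ 0) + ((t : ℝ) : EReal) * E (γ 1)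
      - ((lam / 2 * t * (1 - t) * dist (γ 0) (γ 1) ^ 2 : ℝ) : EReal)

/-- The descending slope `|∂⁻E|(y) = limsup_{z→y} (E(y)−E(z))⁺ / d(y,z)`,
set to `∞` outside the domain `{E < ∞}` of `E`. -/
noncomputable def descendingSlope {Y : Type*} [MetricSpace Y] (E : Y → EReal) (y : Y) :
    ℝ≥0∞ :=
  if E y = ⊤ then ⊤
  else Filter.limsup (fun z => ENNReal.ofReal ((E y - E z).toReal / dist y z))
      (nhdsWithin y {y}ᶜ)

/-- `ω(y; (y_n)) := limsup_n d(y, y_n)²`. -/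
noncomputable def asymptoticRadius {Y : Type*} [MetricSpace Y] (yn : ℕ → Y) (y : Y) : ℝ :=
  Filter.limsup (fun n => dist y (yn n) ^ 2) Filter.atTop

/-- Weak convergence of a bounded sequence: `y` is an asymptotic center
(i.e. a minimizer of `ω(·; ·)`) of every subsequence. -/
def WeakConv {Y : Type*} [MetricSpace Y] (yn : ℕ → Y) (y : Y) : Prop :=
  Bornology.IsBounded (Set.range yn) ∧
    ∀ φ : ℕ → ℕ, StrictMono φ →
      ∀ z : Y, asymptoticRadius (yn ∘ φ) y ≤ asymptoticRadius (yn ∘ φ) z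

/-- Absolute continuity on a set `I ⊆ ℝ`: there is a nonnegative integrable `g`
with `d(y_s, y_t) ≤ ∫_s^t g` for `s ≤ t` in `I`. -/
def AbsContOnSet {Y : Type*} [MetricSpace Y] (y : ℝ → Y) (I : Set ℝ) : Prop :=
  ∃ g : ℝ → ℝ, (∀ t, 0 ≤ g t) ∧ MeasureTheory.IntegrableOn g I ∧
    ∀ s ∈ I, ∀ t ∈ I, s ≤ t → dist (y s) (y t) ≤ ∫ r in s..t, g r

/-- Absolute continuity on the interval `[a,b]`. -/
def AbsContOn {Y : Type*} [MetricSpace Y] (y : ℝ → Y) (a b : ℝ) : Prop :=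
  AbsContOnSet y (Set.Icc a b)

/-- Local absolute continuity on `(0,∞)`. -/
def LocAbsCont {Y : Type*} [MetricSpace Y] (y : ℝ → Y) : Prop :=
  ∀ a b : ℝ, 0 < a → a ≤ b → AbsContOn y a b

/-- The Evolution Variational Inequality: for every `z`, for a.e. `t > 0` the
derivative of `t ↦ ½ d²(y_t, z)` exists and
`(d/dt)(½d²(y_t,z)) + E(y_t) + (lam/2)d²(y_t,z) ≤ E(z)`. -/
def EVI {Y : Type*} [MetricSpace Y] (lam : ℝ) (E : Y → EReal) (y : ℝ → Y) : Prop :=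
  ∀ z : Y, ∀ᵐ t ∂(MeasureTheory.volume.restrict (Set.Ioi (0:ℝ))),
    ∃ d' : ℝ, HasDerivAt (fun s => dist (y s) z ^ 2 / 2) d' t ∧
      (d' : EReal) + E (y t) + ((lam / 2 * dist (y t) z ^ 2 : ℝ) : EReal) ≤ E z

/-- A gradient flow trajectory for `E` starting from `y₀`: a locally absolutely
continuous curve on `(0,∞)` converging to `y₀` at `0` and satisfying the EVI. -/
def GradientFlow {Y : Type*} [MetricSpace Y] (lam : ℝ) (E : Y → EReal) (y₀ : Y)
    (y : ℝ → Y) : Prop :=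
  LocAbsCont y ∧ Filter.Tendsto y (nhdsWithin 0 (Set.Ioi 0)) (nhds y₀) ∧ EVI lam E y

/-!
Fix a point `z` of finite descending slope `S`. By `λ`-convexity along the geodesic from `z` to
`x`, the slope at `z` controls the decrease of `E` globally:
`E z - E x ≤ S d(z, x) - (λ/2) d²(z, x)`. Inserting this with `x = y_t` into the EVI tested at
`z`, the two quadratic terms add up and `f t = d(y_t, z)` satisfies `f f' ≤ S f - λ f²` almost
everywhere, hence `f' ≤ S - λ f`: where `f` vanishes it has a minimum, so `f' = 0 ≤ S` there.
Since `f` is absolutely continuous, Grönwall's inequality on `[a, h]` followed by `a ↓ 0` gives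
`d(y_h, z) ≤ e^{-λh} d(y₀, z) + S ∫₀ʰ e^{-λt} dt`, and one takes `z = y₀`.
-/

theorem absolutelyContinuousOnInterval_of_dist_le_dist {X Z : Type*} [PseudoMetricSpace X]
    [PseudoMetricSpace Z] {f : ℝ → X} {G : ℝ → Z} {a b : ℝ}
    (hG : AbsolutelyContinuousOnInterval G a b)
    (hfG : ∀ s ∈ uIcc a b, ∀ t ∈ uIcc a b, dist (f s) (f t) ≤ dist (G s) (G t)) :
    AbsolutelyContinuousOnInterval f a b := by
  rw [absolutelyContinuousOnInterval_iff] at hG ⊢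
  intro ε hε
  obtain ⟨δ, hδ, hGδ⟩ := hG ε hε
  refine ⟨δ, hδ, fun I hI hlt => (Finset.sum_le_sum fun i hi => ?_).trans_lt (hGδ I hI hlt)⟩
  exact hfG _ (hI.1 i hi).1 _ (hI.1 i hi).2

theorem absolutelyContinuousOnInterval_of_dist_le_integral {X : Type*} [PseudoMetricSpace X]
    {f : ℝ → X} {g : ℝ → ℝ} {a b : ℝ} (hg : IntervalIntegrable g volume a b)
    (hfg : ∀ s ∈ uIcc a b, ∀ t ∈ uIcc a b, s ≤ t → dist (f s) (f t) ≤ ∫ r in s..t, g r) :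
    AbsolutelyContinuousOnInterval f a b := by
  refine absolutelyContinuousOnInterval_of_dist_le_dist
    (hg.absolutelyContinuousOnInterval_intervalIntegral left_mem_uIcc) fun s hs t ht => ?_
  wlog hst : s ≤ t generalizing s t
  · simpa only [dist_comm] using this t ht s hs (le_of_not_ge hst)
  have hga : ∀ r ∈ uIcc a b, IntervalIntegrable g volume a r := fun r hr =>
    hg.mono_set (uIcc_subset_uIcc left_mem_uIcc hr)
  calc dist (f s) (f t) ≤ ∫ r in s..t, g r := hfg s hs t ht hst
    _ = (∫ r in a..t, g r) - ∫ r in a..s, g r :=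
        (intervalIntegral.integral_interval_sub_left (hga t ht) (hga s hs)).symm
    _ ≤ dist (∫ r in a..s, g r) (∫ r in a..t, g r) := by
        rw [dist_comm, Real.dist_eq]
        exact le_abs_self _

theorem le_exp_mul_add_integral_of_deriv_le {f g : ℝ → ℝ} {a b lam : ℝ} (hab : a ≤ b)
    (hf : AbsolutelyContinuousOnInterval f a b) (hg : IntervalIntegrable g volume a b)
    (hfg : ∀ᵐ t ∂volume.restrict (Icc a b), deriv f t ≤ g t - lam * f t) :
    f b ≤ Real.exp (-lam * (b - a)) * f a + ∫ t in a..b, Real.exp (-lam * (b - t)) * g t := by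
  set w : ℝ → ℝ := fun t => Real.exp (-lam * (b - t))
  have hw : ∀ t, HasDerivAt w (lam * w t) t := fun t => by
    simpa [w, mul_comm] using (((hasDerivAt_id t).const_sub b).const_mul (-lam)).exp
  have hwf : AbsolutelyContinuousOnInterval (fun t => w t * f t) a b :=
    AbsolutelyContinuousOnInterval.fun_mul
      (ContDiffOn.absolutelyContinuousOnInterval (by fun_prop)) hf
  have hderiv : ∀ᵐ t ∂volume.restrict (Icc a b), deriv (fun t => w t * f t) t ≤ w t * g t := by
    filter_upwards [hfg, (ae_restrict_iff' measurableSet_Icc).2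
      (uIcc_of_le hab ▸ hf.ae_differentiableAt)] with t ht hft
    rw [((hw t).fun_mul hft.hasDerivAt).deriv]
    linarith [mul_le_mul_of_nonneg_left ht (Real.exp_pos (-lam * (b - t))).le]
  have hint : ∫ t in a..b, deriv (fun t => w t * f t) t ≤ ∫ t in a..b, w t * g t :=
    intervalIntegral.integral_mono_ae_restrict hab hwf.intervalIntegrable_deriv
      (hg.continuousOn_mul (by fun_prop)) hderiv
  have hwb : w b = 1 := by simp [w]
  rw [hwf.integral_deriv_eq_sub, hwb, one_mul] at hint
  linarith

theorem deriv_le_of_hasDerivAt_sq_div_two_le {f : ℝ → ℝ} {t f₂' c : ℝ}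
    (hf : ∀ᶠ s in 𝓝 t, 0 ≤ f s) (hf₂ : HasDerivAt (fun s => f s ^ 2 / 2) f₂' t)
    (hle : f₂' ≤ f t * c) (hc : f t = 0 → 0 ≤ c) : deriv f t ≤ c := by
  rcases hf.self_of_nhds.eq_or_lt with hzero | hpos
  · have hmin : IsLocalMin f t := by
      filter_upwards [hf] with s hs using hzero ▸ hs
    exact hmin.deriv_eq_zero.trans_le (hc hzero.symm)
  · have hsqrt : f =ᶠ[𝓝 t] fun s => √(2 * (f s ^ 2 / 2)) := by
      filter_upwards [hf] with s hs
      rw [mul_div_cancel₀ _ two_ne_zero, Real.sqrt_sq hs]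
    have hderiv : HasDerivAt f (f₂' / f t) t := by
      refine (((hf₂.const_mul 2).sqrt (by positivity)).congr_of_eventuallyEq hsqrt).congr_deriv ?_
      rw [mul_div_cancel₀ _ two_ne_zero, Real.sqrt_sq hpos.le, mul_div_mul_left _ _ two_ne_zero]
    rwa [hderiv.deriv, div_le_iff₀' hpos]

section MetricSpace

variable {Y : Type*} [MetricSpace Y] {lam : ℝ} {E : Y → EReal} {γ ytraj : ℝ → Y} {y z : Y}

theorem LocAbsCont.absolutelyContinuousOnInterval {a b : ℝ} (hy : LocAbsCont ytraj) (ha : 0 < a)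
    (hab : a ≤ b) : AbsolutelyContinuousOnInterval ytraj a b := by
  obtain ⟨g, -, hg, hyg⟩ := hy a b ha hab
  rw [← uIcc_of_le hab] at hyg
  exact absolutelyContinuousOnInterval_of_dist_le_integral
    ((intervalIntegrable_iff_integrableOn_Icc_of_le hab).2 hg) hyg

theorem IsGeodesic.dist_zero_left (hγ : IsGeodesic γ) {t : ℝ} (ht : t ∈ Icc (0 : ℝ) 1) :
    dist (γ 0) (γ t) = t * dist (γ 0) (γ 1) := by
  rw [hγ 0 (by simp) t ht, zero_sub, abs_neg, abs_of_nonneg ht.1]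

theorem IsGeodesic.tendsto_nhdsNE (hγ : IsGeodesic γ) (hne : γ 0 ≠ γ 1) :
    Tendsto γ (𝓝[>] 0) (𝓝[≠] (γ 0)) := by
  have hdist : ∀ᶠ t in 𝓝[>] (0 : ℝ), t * dist (γ 0) (γ 1) = dist (γ t) (γ 0) := by
    filter_upwards [Ioc_mem_nhdsGT zero_lt_one] with t ht
    rw [dist_comm (γ t), hγ.dist_zero_left (Ioc_subset_Icc_self ht)]
  refine tendsto_nhdsWithin_iff.2 ⟨tendsto_iff_dist_tendsto_zero.2 ?_, ?_⟩
  · exact (((continuous_mul_const _).tendsto' 0 0 (zero_mul _)).mono_left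
      nhdsWithin_le_nhds).congr' hdist
  · filter_upwards [hdist, self_mem_nhdsWithin] with t ht hpos
    exact dist_pos.1 (ht ▸ mul_pos hpos (dist_pos.2 hne))

theorem ne_top_of_descendingSlope_ne_top (hsl : descendingSlope E y ≠ ⊤) : E y ≠ ⊤ :=
  fun hy => hsl (if_pos hy)

theorem eventually_sub_div_dist_lt_of_descendingSlope_lt {c : ℝ} (hsl : descendingSlope E y ≠ ⊤)
    (hc : (descendingSlope E y).toReal < c) :
    ∀ᶠ z in 𝓝[≠] y, (E y - E z).toReal / dist y z < c := by
  have hlt : descendingSlope E y < ENNReal.ofReal c := (ENNReal.lt_ofReal_iff_toReal_lt hsl).2 hc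
  rw [descendingSlope, if_neg (ne_top_of_descendingSlope_ne_top hsl)] at hlt
  filter_upwards [eventually_lt_of_limsup_lt hlt] with z hz
  exact (ENNReal.ofReal_lt_ofReal_iff (ENNReal.toReal_nonneg.trans_lt hc)).1 hz

theorem LamConvex.ne_top_and_toReal_le (hconv : LamConvex lam E) (hbot : ∀ y, E y ≠ ⊥)
    (hγ : IsGeodesic γ) (h0 : E (γ 0) ≠ ⊤) (h1 : E (γ 1) ≠ ⊤) {t : ℝ} (ht : t ∈ Icc (0 : ℝ) 1) :
    E (γ t) ≠ ⊤ ∧ (E (γ t)).toReal ≤ (1 - t) * (E (γ 0)).toReal + t * (E (γ 1)).toReal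
      - lam / 2 * t * (1 - t) * dist (γ 0) (γ 1) ^ 2 := by
  have hle := hconv γ hγ t ht
  rw [← EReal.coe_toReal h0 (hbot _), ← EReal.coe_toReal h1 (hbot _)] at hle
  norm_cast at hle
  have htop : E (γ t) ≠ ⊤ := ne_top_of_le_ne_top (EReal.coe_ne_top _) hle
  rw [← EReal.coe_toReal htop (hbot _), EReal.coe_le_coe_iff] at hle
  exact ⟨htop, hle⟩

theorem LamConvex.sub_div_dist_add_le_of_isGeodesic (hconv : LamConvex lam E)
    (hbot : ∀ y, E y ≠ ⊥) (hγ : IsGeodesic γ) (h0 : E (γ 0) ≠ ⊤) (h1 : E (γ 1) ≠ ⊤)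
    (hne : γ 0 ≠ γ 1) {t : ℝ} (ht : t ∈ Ioc (0 : ℝ) 1) :
    ((E (γ 0)).toReal - (E (γ 1)).toReal) / dist (γ 0) (γ 1)
        + lam / 2 * (1 - t) * dist (γ 0) (γ 1)
      ≤ (E (γ 0) - E (γ t)).toReal / dist (γ 0) (γ t) := by
  have ht' := Ioc_subset_Icc_self ht
  obtain ⟨htop, hle⟩ := hconv.ne_top_and_toReal_le hbot hγ h0 h1 ht'
  have hD : 0 < dist (γ 0) (γ 1) := dist_pos.2 hne
  rw [EReal.toReal_sub h0 (hbot _) htop (hbot _), hγ.dist_zero_left ht',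
    le_div_iff₀ (mul_pos ht.1 hD)]
  calc (((E (γ 0)).toReal - (E (γ 1)).toReal) / dist (γ 0) (γ 1)
          + lam / 2 * (1 - t) * dist (γ 0) (γ 1)) * (t * dist (γ 0) (γ 1))
      = t * ((E (γ 0)).toReal - (E (γ 1)).toReal)
          + lam / 2 * t * (1 - t) * dist (γ 0) (γ 1) ^ 2 := by field_simp
    _ ≤ (E (γ 0)).toReal - (E (γ t)).toReal := by linarith

theorem LamConvex.sub_div_dist_add_le_descendingSlope (hY : GeodesicSpace Y)
    (hconv : LamConvex lam E) (hbot : ∀ y, E y ≠ ⊥) (hsl : descendingSlope E y ≠ ⊤)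
    (hz : E z ≠ ⊤) (hyz : y ≠ z) :
    ((E y).toReal - (E z).toReal) / dist y z + lam / 2 * dist y z
      ≤ (descendingSlope E y).toReal := by
  obtain ⟨γ, hγ, rfl, rfl⟩ := hY y z
  refine le_of_forall_gt_imp_ge_of_dense fun c hc => ?_
  have hlim : Tendsto (fun t => ((E (γ 0)).toReal - (E (γ 1)).toReal) / dist (γ 0) (γ 1)
      + lam / 2 * (1 - t) * dist (γ 0) (γ 1)) (𝓝[>] 0)
      (𝓝 (((E (γ 0)).toReal - (E (γ 1)).toReal) / dist (γ 0) (γ 1)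
        + lam / 2 * dist (γ 0) (γ 1))) :=
    (Continuous.tendsto' (by fun_prop) 0 _ (by simp)).mono_left nhdsWithin_le_nhds
  refine le_of_tendsto hlim ?_
  filter_upwards [(hγ.tendsto_nhdsNE hyz).eventually
    (eventually_sub_div_dist_lt_of_descendingSlope_lt hsl hc),
    Ioc_mem_nhdsGT zero_lt_one] with t hlt ht
  exact (hconv.sub_div_dist_add_le_of_isGeodesic hbot hγ
    (ne_top_of_descendingSlope_ne_top hsl) hz hyz ht).trans hlt.le

theorem LamConvex.sub_le_descendingSlope_mul_dist_sub (hY : GeodesicSpace Y)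
    (hconv : LamConvex lam E) (hbot : ∀ y, E y ≠ ⊥) (hsl : descendingSlope E y ≠ ⊤)
    (hz : E z ≠ ⊤) :
    (E y).toReal - (E z).toReal
      ≤ (descendingSlope E y).toReal * dist y z - lam / 2 * dist y z ^ 2 := by
  rcases eq_or_ne y z with rfl | hyz
  · simp
  have hD : 0 < dist y z := dist_pos.2 hyz
  have hslope := mul_le_mul_of_nonneg_right
    (hconv.sub_div_dist_add_le_descendingSlope hY hbot hsl hz hyz) hD.le
  rw [add_mul, div_mul_cancel₀ _ hD.ne'] at hslope
  linarith

theorem EVI.ae_exists_hasDerivAt_toReal_le (hevi : EVI lam E ytraj) (hbot : ∀ y, E y ≠ ⊥)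
    (hz : E z ≠ ⊤) :
    ∀ᵐ t ∂volume.restrict (Ioi (0 : ℝ)), E (ytraj t) ≠ ⊤ ∧
      ∃ d' : ℝ, HasDerivAt (fun s => dist (ytraj s) z ^ 2 / 2) d' t ∧
        d' + (E (ytraj t)).toReal + lam / 2 * dist (ytraj t) z ^ 2 ≤ (E z).toReal := by
  filter_upwards [hevi z] with t ⟨d', hd', hle⟩
  rw [← EReal.coe_toReal hz (hbot _)] at hle
  have htop : E (ytraj t) ≠ ⊤ := fun htop => by
    rw [htop, EReal.coe_add_top, EReal.top_add_coe, top_le_iff] at hle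
    exact EReal.coe_ne_top _ hle
  rw [← EReal.coe_toReal htop (hbot _)] at hle
  exact ⟨htop, d', hd', by exact_mod_cast hle⟩

theorem EVI.ae_deriv_dist_le (hevi : EVI lam E ytraj) (hY : GeodesicSpace Y)
    (hconv : LamConvex lam E) (hbot : ∀ y, E y ≠ ⊥) (hsl : descendingSlope E z ≠ ⊤) :
    ∀ᵐ t ∂volume.restrict (Ioi (0 : ℝ)), deriv (fun s => dist (ytraj s) z) t
      ≤ (descendingSlope E z).toReal - lam * dist (ytraj t) z := by
  filter_upwards [hevi.ae_exists_hasDerivAt_toReal_le hbot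
    (ne_top_of_descendingSlope_ne_top hsl)] with t ⟨htop, d', hd', hle⟩
  have hslope := hconv.sub_le_descendingSlope_mul_dist_sub hY hbot hsl htop
  rw [dist_comm z] at hslope
  refine deriv_le_of_hasDerivAt_sq_div_two_le (.of_forall fun _ => dist_nonneg) hd' ?_ ?_
  · linarith
  · intro hzero
    simp [hzero]

theorem EVI.dist_le_exp_mul_dist_add {a b : ℝ} (hevi : EVI lam E ytraj) (hac : LocAbsCont ytraj)
    (hY : GeodesicSpace Y) (hconv : LamConvex lam E) (hbot : ∀ y, E y ≠ ⊥)
    (hsl : descendingSlope E z ≠ ⊤) (ha : 0 < a) (hab : a ≤ b) :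
    dist (ytraj b) z ≤ Real.exp (-lam * (b - a)) * dist (ytraj a) z
      + (descendingSlope E z).toReal * ∫ t in (0 : ℝ)..(b - a), Real.exp (-lam * t) := by
  have hdist : AbsolutelyContinuousOnInterval (fun t => dist (ytraj t) z) a b :=
    absolutelyContinuousOnInterval_of_dist_le_dist (hac.absolutelyContinuousOnInterval ha hab)
      fun _ _ _ _ => dist_dist_dist_le_left _ _ _
  have hsub : Icc a b ⊆ Ioi 0 := fun _ ht => ha.trans_le ht.1
  have hgronwall := le_exp_mul_add_integral_of_deriv_le hab hdist intervalIntegrable_const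
    (ae_restrict_of_ae_restrict_of_subset hsub (hevi.ae_deriv_dist_le hY hconv hbot hsl))
  rwa [intervalIntegral.integral_mul_const, mul_comm (∫ t in a..b, _),
    intervalIntegral.integral_comp_sub_left (fun t => Real.exp (-lam * t)), sub_self] at hgronwall

end MetricSpace

theorem gradientFlow_dist_from_start_general {Y : Type*} [MetricSpace Y]
    (hY : GeodesicSpace Y) (lam : ℝ) (E : Y → EReal) (hbot : ∀ y, E y ≠ ⊥)
    (hconv : LamConvex lam E) (y z : Y) (hsl : descendingSlope E z ≠ ⊤)
    (ytraj : ℝ → Y) (hgf : GradientFlow lam E y ytraj) (h : ℝ) (hh : 0 < h) :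
    dist z (ytraj h) ≤ Real.exp (-lam * h) * dist z y
      + (descendingSlope E z).toReal * ∫ t in (0 : ℝ)..h, Real.exp (-lam * t) := by
  obtain ⟨hac, hstart, hevi⟩ := hgf
  have hexp : Tendsto (fun a => Real.exp (-lam * (h - a))) (𝓝[>] 0) (𝓝 (Real.exp (-lam * h))) :=
    (Continuous.tendsto' (by fun_prop) 0 _ (by simp)).mono_left nhdsWithin_le_nhds
  have hprim : Continuous fun r => ∫ t in (0 : ℝ)..r, Real.exp (-lam * t) :=
    intervalIntegral.continuous_primitive
      (fun _ _ => Continuous.intervalIntegrable (by fun_prop) _ _) 0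
  have hint : Tendsto (fun a => ∫ t in (0 : ℝ)..(h - a), Real.exp (-lam * t)) (𝓝[>] 0)
      (𝓝 (∫ t in (0 : ℝ)..h, Real.exp (-lam * t))) :=
    ((hprim.comp (continuous_sub_left h)).tendsto' 0 _ (by simp)).mono_left nhdsWithin_le_nhds
  rw [dist_comm z, dist_comm z]
  refine ge_of_tendsto
    ((hexp.mul (hstart.dist tendsto_const_nhds)).add (hint.const_mul _)) ?_
  filter_upwards [Ioc_mem_nhdsGT hh] with a ha
  exact hevi.dist_le_exp_mul_dist_add hac hY hconv hbot hsl ha.1 ha.2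

/-- **Distance estimate from the starting point along a gradient flow**: if
`y ∈ D(|∂⁻E|)` then `d(y, y_h) ≤ |∂⁻E|(y)·∫₀^h e^{−λt} dt` for every `h > 0`. -/
theorem gradientFlow_dist_from_start {Y : Type*} [MetricSpace Y] [CompleteSpace Y]
    (hY : Cat0 Y) (lam : ℝ) (E : Y → EReal) (hbot : ∀ y, E y ≠ ⊥)
    (hconv : LamConvex lam E) (hlsc : LowerSemicontinuous E)
    (y : Y) (hsl : descendingSlope E y ≠ ⊤)
    (ytraj : ℝ → Y) (hgf : GradientFlow lam E y ytraj) (h : ℝ) (hh : 0 < h) :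
    dist y (ytraj h) ≤
      (descendingSlope E y).toReal * ∫ t in (0:ℝ)..h, Real.exp (-lam * t) := by
  simpa using gradientFlow_dist_from_start_general hY.1 lam E hbot hconv y y hsl ytraj hgf h hh
end

section
/- Let Y be a CAT(0) space, λ ∈ ℝ, and let f : Y → ℝ be λ-convex and Lipschitz with Lipschitz constant L. Then for every y ∈ Y the gradient flow trajectory (y_t)_{t>0} for f starting from y extends continuously to t = 0 and is L-Lipschitz in time: d(y_t, y_s) ≤ L·|t − s| for all t, s ≥ 0. -/
open Filter MeasureTheory Set Bornology
open scoped ENNReal Topology NNReal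

/-!
Fix a time `t > 0` and let `D s = d(y_s, y_t)`. Taking `z = y_t` in the EVI and dividing by `D`
gives `D' ≤ L + |λ|/2 · D` almost everywhere. Since `D` is absolutely continuous and small near `t`,
the curve has upper right metric speed at most `L` at `t`: the `λ`-term disappears in the
limit `s ↓ t`. A continuous curve with this property at every time is `L`-Lipschitz, and the
estimate on `(0, ∞)` passes to its closure `[0, ∞)`.
-/

theorem absolutelyContinuousOnInterval_of_dist_le {X Z : Type*} [PseudoMetricSpace X]
    [PseudoMetricSpace Z] {u : ℝ → X} {v : ℝ → Z} {a b : ℝ}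
    (hv : AbsolutelyContinuousOnInterval v a b)
    (huv : ∀ s ∈ uIcc a b, ∀ t ∈ uIcc a b, dist (u s) (u t) ≤ dist (v s) (v t)) :
    AbsolutelyContinuousOnInterval u a b := by
  rw [absolutelyContinuousOnInterval_iff] at hv ⊢
  intro ε hε
  obtain ⟨δ, hδ, hvδ⟩ := hv ε hε
  refine ⟨δ, hδ, fun E hE hEδ => (Finset.sum_le_sum fun i hi => ?_).trans_lt (hvδ E hE hEδ)⟩
  exact huv _ (hE.1 i hi).1 _ (hE.1 i hi).2

theorem sub_le_mul_sub_of_ae_deriv_le {D : ℝ → ℝ} {a b C : ℝ} (hab : a ≤ b)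
    (hD : AbsolutelyContinuousOnInterval D a b)
    (hC : ∀ᵐ t ∂volume.restrict (Icc a b), deriv D t ≤ C) : D b - D a ≤ C * (b - a) := by
  calc D b - D a = ∫ t in a..b, deriv D t := hD.integral_deriv_eq_sub.symm
    _ ≤ ∫ _ in a..b, C :=
        intervalIntegral.integral_mono_ae_restrict hab hD.intervalIntegrable_deriv
          intervalIntegrable_const hC
    _ = C * (b - a) := by rw [intervalIntegral.integral_const, smul_eq_mul, mul_comm]

theorem deriv_le_of_hasDerivAt_sq_div_two {D : ℝ → ℝ} {d t C : ℝ} (hD : ∀ s, 0 ≤ D s)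
    (hd : HasDerivAt (fun s => D s ^ 2 / 2) d t) (hC : 0 ≤ C) (hdC : d ≤ D t * C) :
    deriv D t ≤ C := by
  -- Where `D` is not differentiable, `deriv D t` is the junk value `0`, and the bound persists.
  by_cases hdiff : DifferentiableAt ℝ D t
  swap
  · rwa [deriv_zero_of_not_differentiableAt hdiff]
  rcases (hD t).eq_or_lt with hzero | hpos
  · have hmin : IsLocalMin D t := Eventually.of_forall fun s => hzero ▸ hD s
    rwa [hmin.deriv_eq_zero]
  · have hchain : d = D t * deriv D t := by
      refine hd.unique (((hdiff.hasDerivAt.pow 2).div_const 2).congr_deriv ?_)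
      ring
    exact le_of_mul_le_mul_left (hchain ▸ hdC) hpos

theorem dist_le_of_frequently_dist_le {X : Type*} [PseudoMetricSpace X] {u : ℝ → X} {a b C : ℝ}
    (hab : a ≤ b) (hu : ContinuousOn u (Icc a b))
    (hspeed : ∀ t ∈ Ico a b, ∀ r > C, ∃ᶠ s in 𝓝[>] t, dist (u s) (u t) ≤ r * (s - t)) :
    dist (u b) (u a) ≤ C * (b - a) := by
  refine image_le_of_liminf_slope_right_le_deriv_boundary (f := fun t => dist (u t) (u a))
    (B := fun t => C * (t - a)) (B' := fun _ => C) (by fun_prop) (by simp)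
    (by fun_prop) (fun t _ => ?_) (fun t ht r hr => ?_) (right_mem_Icc.2 hab)
  · simpa using (((hasDerivAt_id t).sub_const a).const_mul C).hasDerivWithinAt
  obtain ⟨r', hCr', hr'r⟩ := exists_between hr
  refine ((hspeed t ht r' hCr').and_eventually self_mem_nhdsWithin).mono fun s ⟨hs, hts⟩ => ?_
  have hts' : 0 < s - t := sub_pos.2 hts
  rw [slope_def_field, div_lt_iff₀ hts']
  calc dist (u s) (u a) - dist (u t) (u a) ≤ dist (u s) (u t) :=
        sub_le_iff_le_add.2 (dist_triangle _ _ _)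
    _ ≤ r' * (s - t) := hs
    _ < r * (s - t) := mul_lt_mul_of_pos_right hr'r hts'

theorem lipschitzOnWith_of_frequently_dist_le {X : Type*} [PseudoMetricSpace X] {u : ℝ → X}
    {I : Set ℝ} [I.OrdConnected] {C : ℝ≥0} (hu : ContinuousOn u I)
    (hspeed : ∀ t ∈ I, ∀ r > (C : ℝ), ∃ᶠ s in 𝓝[>] t, dist (u s) (u t) ≤ r * (s - t)) :
    LipschitzOnWith C u I := by
  refine LipschitzOnWith.of_dist_le_mul fun s hs t ht => ?_
  wlog hts : t ≤ s generalizing s t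
  · rw [dist_comm, dist_comm s]
    exact this t ht s hs (le_of_not_ge hts)
  have hsub : Icc t s ⊆ I := Set.OrdConnected.out ‹_› ht hs
  rw [Real.dist_eq, abs_of_nonneg (sub_nonneg.2 hts)]
  exact dist_le_of_frequently_dist_le hts (hu.mono hsub) fun r hr =>
    hspeed r (hsub (Ico_subset_Icc_self hr))

section Curves

variable {Y : Type*} [MetricSpace Y] {y : ℝ → Y}

theorem AbsContOn.exists_dist_le_dist {a b : ℝ} (hab : a ≤ b) (hy : AbsContOn y a b) :
    ∃ G : ℝ → ℝ, AbsolutelyContinuousOnInterval G a b ∧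
      ∀ s ∈ uIcc a b, ∀ t ∈ uIcc a b, dist (y s) (y t) ≤ dist (G s) (G t) := by
  obtain ⟨g, -, hg, hyg⟩ := hy
  have hint : IntervalIntegrable g volume a b :=
    (intervalIntegrable_iff_integrableOn_Icc_of_le hab).2 hg
  refine ⟨fun t => ∫ r in a..t, g r,
    hint.absolutelyContinuousOnInterval_intervalIntegral left_mem_uIcc, fun s hs t ht => ?_⟩
  wlog hst : s ≤ t generalizing s t
  · rw [dist_comm, dist_comm (∫ r in a..s, g r)]
    exact this t ht s hs (le_of_not_ge hst)
  have hint' : ∀ c ∈ uIcc a b, IntervalIntegrable g volume a c := fun c hc =>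
    hint.mono_set (uIcc_subset_uIcc_left hc)
  rw [dist_comm (∫ r in a..s, g r), Real.dist_eq,
    intervalIntegral.integral_interval_sub_left (hint' t ht) (hint' s hs)]
  rw [uIcc_of_le hab] at hs ht
  exact (hyg s hs t ht hst).trans (le_abs_self _)

theorem AbsContOn.absolutelyContinuousOnInterval_dist {a b : ℝ} (hab : a ≤ b)
    (hy : AbsContOn y a b) (z : Y) :
    AbsolutelyContinuousOnInterval (fun t => dist (y t) z) a b := by
  obtain ⟨G, hG, hyG⟩ := hy.exists_dist_le_dist hab
  exact absolutelyContinuousOnInterval_of_dist_le hG fun s hs t ht =>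
    (dist_dist_dist_le_left _ _ _).trans (hyG s hs t ht)

theorem LocAbsCont.continuousOn (hy : LocAbsCont y) : ContinuousOn y (Ioi 0) := by
  refine fun t (ht : 0 < t) => ContinuousAt.continuousWithinAt ?_
  have hle : t / 2 ≤ t + 1 := by linarith
  have hdist : ContinuousOn (fun s => dist (y s) (y t)) (Icc (t / 2) (t + 1)) :=
    uIcc_of_le hle ▸
      ((hy _ _ (half_pos ht) hle).absolutelyContinuousOnInterval_dist hle (y t)).continuousOn
  refine tendsto_iff_dist_tendsto_zero.2 ?_
  simpa using (hdist.continuousAt (Icc_mem_nhds (half_lt_self ht) (lt_add_one t))).tendsto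

variable {lam : ℝ} {L : ℝ≥0} {f : Y → ℝ} {S : Set Y}

theorem EVI.ae_deriv_dist_le_s17 (hevi : EVI lam (fun x => (f x : EReal)) y)
    (hf : LipschitzOnWith L f S) (hyS : MapsTo y (Ioi 0) S) {z : Y} (hz : z ∈ S) :
    ∀ᵐ t ∂volume.restrict (Ioi 0),
      deriv (fun s => dist (y s) z) t ≤ L + |lam| / 2 * dist (y t) z := by
  filter_upwards [hevi z, ae_restrict_mem measurableSet_Ioi] with t ⟨d, hd, hle⟩ ht
  have hevi_real : d + f (y t) + lam / 2 * dist (y t) z ^ 2 ≤ f z := by exact_mod_cast hle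
  have hf_sub : f z - f (y t) ≤ L * dist (y t) z := by
    rw [dist_comm]
    exact (le_abs_self _).trans (hf.dist_le_mul z hz (y t) (hyS ht))
  have hlam : -lam * dist (y t) z ^ 2 ≤ |lam| * dist (y t) z ^ 2 := by
    gcongr
    exact neg_le_abs lam
  exact deriv_le_of_hasDerivAt_sq_div_two (fun _ => dist_nonneg) hd (by positivity) (by linarith)

theorem EVI.eventually_dist_le (hevi : EVI lam (fun x => (f x : EReal)) y) (hy : LocAbsCont y)
    (hf : LipschitzOnWith L f S) (hyS : MapsTo y (Ioi 0) S) {t r : ℝ} (ht : 0 < t) (hr : L < r) :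
    ∀ᶠ s in 𝓝[>] t, dist (y s) (y t) ≤ r * (s - t) := by
  have hcont : ContinuousAt (fun s => L + |lam| / 2 * dist (y s) (y t)) t := by
    have := hy.continuousOn.continuousAt (Ioi_mem_nhds ht)
    fun_prop
  have hbound : ∀ᶠ s in 𝓝[≥] t, L + |lam| / 2 * dist (y s) (y t) < r :=
    (hcont.eventually_lt_const (by simpa using hr)).filter_mono nhdsWithin_le_nhds
  obtain ⟨b, htb, hb⟩ := mem_nhdsGE_iff_exists_Icc_subset.1 hbound
  filter_upwards [Ioc_mem_nhdsGT htb] with s hs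
  have hderiv : ∀ᵐ u ∂volume.restrict (Icc t s), deriv (fun v => dist (y v) (y t)) u ≤ r := by
    filter_upwards [ae_restrict_of_ae_restrict_of_subset (fun u hu => ht.trans_le hu.1)
      (hevi.ae_deriv_dist_le_s17 hf hyS (hyS ht)), ae_restrict_mem measurableSet_Icc] with u hu htu
    exact hu.trans (hb ⟨htu.1, htu.2.trans hs.2⟩).le
  simpa using sub_le_mul_sub_of_ae_deriv_le hs.1.le
    ((hy t s ht hs.1.le).absolutelyContinuousOnInterval_dist hs.1.le (y t)) hderiv

theorem EVI.lipschitzOnWith (hevi : EVI lam (fun x => (f x : EReal)) y) (hy : LocAbsCont y)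
    (hf : LipschitzOnWith L f (y '' Ioi 0)) : LipschitzOnWith L y (Ioi 0) :=
  lipschitzOnWith_of_frequently_dist_le hy.continuousOn fun _ ht _ hr =>
    (hevi.eventually_dist_le hy hf (mapsTo_image y _) ht hr).frequently

end Curves

theorem gradientFlow_lipschitz_in_time_general {Y : Type*} [MetricSpace Y] {lam : ℝ} {L : ℝ≥0}
    {f : Y → ℝ} {y : Y} {ytraj : ℝ → Y} (hlip : LipschitzOnWith L f (ytraj '' Ioi 0))
    (hgf : GradientFlow lam (fun x => (f x : EReal)) y ytraj) :
    LipschitzOnWith L (Function.update ytraj 0 y) (Ici 0) := by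
  obtain ⟨hac, hlim, hevi⟩ := hgf
  rw [← closure_Ioi (0 : ℝ)]
  refine LipschitzOnWith.closure ?_ fun s hs t ht => ?_
  · rw [closure_Ioi, continuousOn_update_iff, Ici_sdiff_left]
    exact ⟨hac.continuousOn, fun _ => hlim⟩
  · rw [Function.update_of_ne (ne_of_gt hs), Function.update_of_ne (ne_of_gt ht)]
    exact hevi.lipschitzOnWith hac hlip hs ht

/-- **The gradient flow of a `λ`-convex `L`-Lipschitz function on a CAT(0) space extends
continuously to `t = 0` and is `L`-Lipschitz in time.** -/
theorem gradientFlow_lipschitz_in_time {Y : Type*} [MetricSpace Y] [CompleteSpace Y]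
    (hY : Cat0 Y) (lam : ℝ) (L : ℝ≥0) (f : Y → ℝ)
    (hconv : LamConvex lam (fun y => ((f y : ℝ) : EReal)))
    (hlip : LipschitzWith L f)
    (y : Y) (ytraj : ℝ → Y)
    (hgf : GradientFlow lam (fun y => ((f y : ℝ) : EReal)) y ytraj) :
    ∀ s t : ℝ, 0 ≤ s → 0 ≤ t →
      dist (if s = 0 then y else ytraj s) (if t = 0 then y else ytraj t) ≤
        (L : ℝ) * |t - s| := by
  intro s t hs ht
  simpa [Function.update_apply, Real.dist_eq, abs_sub_comm] using
    (gradientFlow_lipschitz_in_time_general hlip.lipschitzOnWith hgf).dist_le_mul s hs t ht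
end
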